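/- Let A ∈ ℝ^{m×n}, y ∈ ℝ^m, let x* ∈ ℝⁿ be k-sparse and set η = y − Ax*. Let q ≥ 2k be a positive integer, set t = ⌈q/k⌉ and ψ = 3((√5+1)/2)²(t+1), and let δ₁ ≤ δ₂ ≤ δ₃ be restricted isometry constants of orders k, 2k, 3k for A. Suppose δ₃ < 2/(√(ψ² + 6ψ + 1) + ψ + 1). Let (x^p) be a PGROT sequence for (A, y, k, q). Then ρ̄ := 3((√5+1)/2)²(t+1)δ₃√((1+δ₁)/(1−δ₂)) < 1 and for every p ≥ 0: ‖x^{p+1} − x*‖₂ ≤ ρ̄^p‖x^0 − x*‖₂ + (τ̄/(1−ρ̄))‖η‖₂, where τ̄ = ((√5+1)/2)²·3(t+1)(1+δ₁)/√(1−δ₂) + (√5+1)/√(1−δ₂). -/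

import Mathlib

/-!
Write `φ = (√5 + 1) / 2`, `u = x^p + h`, `z = w̄ ⊗ u` and `v = x* - x^p`, and let
`r = Aᵀ(y - A x^p) = v + g` with `g = (AᵀA - I) v + Aᵀ η`.

* By the restricted isometry property `‖g_B‖ ≤ ε := δ₃ ‖v‖ + √(1+δ₁) ‖η‖` whenever `|B| ≤ k`
  (`nrm_grad_le`).
* For `|P| ≤ k` one has `‖(u - x*)_P‖ ≤ 2 ε` (`nrm_restr_step_le`): on the support `Ω` of `h` the
  vector `u - x*` equals `g`, and off `Ω` it equals `g - r`. It vanishes off `D ∪ Ω`, where `D` is the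
  union of the supports of `x^p` and `x*`. As `|D| ≤ 2k ≤ q`, the entries of `r` on `D \ Ω` are
  dominated by equally many entries on `Ω \ D`, where `r = g`.
* `‖H_k(z) - x*‖ ≤ φ ‖(z - x*)_T‖` with `T` the union of the supports of `H_k(z)` and `x*`
  (`hard_threshold_le`); `φ²` is the largest eigenvalue of `!![1, 1; 1, 2]`.
* `√(1-δ₂) ‖(z - x*)_T‖ ≤ ‖A (z - x*)‖ + ‖A z_{Tᶜ}‖`. Optimality of `w̄` against the indicator of a
  `k`-set containing the support of `x*` bounds the first term by `√(1+δ₁) 2ε + 2 ‖η‖`. Since `z` has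
  at most `k + q ≤ (t + 1) k` nonzero entries, cutting `z_{Tᶜ}` into `t + 1` blocks of size at most
  `k` (`nrm_mulVec_blocks`) bounds the second by `(t + 1) √(1+δ₁) 2ε`.

As `2 (t + 2) ≤ 3 φ (t + 1)`, this gives `‖x^{p+1} - x*‖ ≤ ρ ‖x^p - x*‖ + τ ‖η‖`
(`one_step`), which is then iterated. The bound `ρ < 1` holds because
`2 / (√(ψ² + 6ψ + 1) + ψ + 1)` is the positive root of `ψ δ² + (ψ + 1) δ = 1`.
-/

open Matrix Finset Filter

/-- Euclidean (ℓ₂) norm of a vector. -/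
noncomputable def nrm {n : ℕ} (x : Fin n → ℝ) : ℝ := Real.sqrt (∑ i, x i ^ 2)

/-- A vector is `s`-sparse if it has at most `s` nonzero entries. -/
def sparse {n : ℕ} (s : ℕ) (x : Fin n → ℝ) : Prop :=
  ((Finset.univ : Finset (Fin n)).filter fun i => x i ≠ 0).card ≤ s

/-- Support of a vector, as a finset. -/
noncomputable def suppF {n : ℕ} (x : Fin n → ℝ) : Finset (Fin n) :=
  (Finset.univ : Finset (Fin n)).filter fun i => x i ≠ 0

/-- Restriction of a vector to an index set (zero outside). -/
def restr {n : ℕ} (x : Fin n → ℝ) (Ω : Finset (Fin n)) : Fin n → ℝ :=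
  fun i => if i ∈ Ω then x i else 0

/-- `δ ∈ [0,1)` is a restricted isometry constant of order `s` for `A`. -/
def RIC {m n : ℕ} (A : Matrix (Fin m) (Fin n) ℝ) (s : ℕ) (δ : ℝ) : Prop :=
  0 ≤ δ ∧ δ < 1 ∧ ∀ x : Fin n → ℝ, sparse s x →
    (1 - δ) * nrm x ^ 2 ≤ nrm (A.mulVec x) ^ 2 ∧
      nrm (A.mulVec x) ^ 2 ≤ (1 + δ) * nrm x ^ 2

/-- `h` is a hard thresholding of `z` at level `q` with support `Ω`. -/
def IsHT {n : ℕ} (q : ℕ) (z h : Fin n → ℝ) (Ω : Finset (Fin n)) : Prop :=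
  Ω.card = q ∧ (∀ i ∈ Ω, h i = z i) ∧ (∀ i ∉ Ω, h i = 0) ∧
    ∀ i ∈ Ω, ∀ j ∉ Ω, |z j| ≤ |z i|

/-- A PGROT iterate sequence for `(A, y, k, q)`. -/
def IsPGROTSeq {m n : ℕ} (A : Matrix (Fin m) (Fin n) ℝ) (y : Fin m → ℝ) (k q : ℕ)
    (x : ℕ → Fin n → ℝ) : Prop :=
  x 0 = 0 ∧ ∀ p : ℕ, ∃ (h : Fin n → ℝ) (Ω : Finset (Fin n)) (w : Fin n → ℝ)
      (Ω' : Finset (Fin n)),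
    IsHT q (Aᵀ.mulVec (y - A.mulVec (x p))) h Ω ∧
    (∑ i, w i) = (k : ℝ) ∧ (∀ i, 0 ≤ w i ∧ w i ≤ 1) ∧
    (∀ w' : Fin n → ℝ, (∑ i, w' i) = (k : ℝ) → (∀ i, 0 ≤ w' i ∧ w' i ≤ 1) →
      nrm (y - A.mulVec (fun i => w i * (x p i + h i))) ^ 2 ≤
        nrm (y - A.mulVec (fun i => w' i * (x p i + h i))) ^ 2) ∧
    IsHT k (fun i => w i * (x p i + h i)) (x (p + 1)) Ω'

/-! ### Euclidean norm and restrictions -/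

lemma le_of_sq_le_sq_of_nonneg {a b : ℝ} (h : a ^ 2 ≤ b ^ 2) (hb : 0 ≤ b) : a ≤ b :=
  (abs_le_of_sq_le_sq' h hb).2

lemma nrm_eq_norm {n : ℕ} (x : Fin n → ℝ) : nrm x = ‖WithLp.toLp 2 x‖ := by
  simp [nrm, EuclideanSpace.norm_eq]

lemma nrm_nonneg {n : ℕ} (x : Fin n → ℝ) : 0 ≤ nrm x := Real.sqrt_nonneg _

lemma nrm_sq {n : ℕ} (x : Fin n → ℝ) : nrm x ^ 2 = ∑ i, x i ^ 2 :=
  Real.sq_sqrt (Finset.sum_nonneg fun _ _ => sq_nonneg _)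

lemma nrm_sq_dot {n : ℕ} (x : Fin n → ℝ) : nrm x ^ 2 = x ⬝ᵥ x := by
  rw [nrm_sq, dotProduct]
  exact Finset.sum_congr rfl fun i _ => sq (x i)

lemma nrm_add_le {n : ℕ} (x y : Fin n → ℝ) : nrm (x + y) ≤ nrm x + nrm y := by
  simp only [nrm_eq_norm, WithLp.toLp_add]
  exact norm_add_le _ _

lemma nrm_neg {n : ℕ} (x : Fin n → ℝ) : nrm (-x) = nrm x := by
  simp [nrm]

lemma nrm_sub_le {n : ℕ} (x y : Fin n → ℝ) : nrm (x - y) ≤ nrm x + nrm y := by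
  rw [sub_eq_add_neg, ← nrm_neg y]
  exact nrm_add_le _ _

lemma dot_le_nrm {n : ℕ} (x y : Fin n → ℝ) : x ⬝ᵥ y ≤ nrm x * nrm y :=
  Real.sum_mul_le_sqrt_mul_sqrt _ _ _

lemma nrm_mono {n : ℕ} {x y : Fin n → ℝ} (h : ∀ i, |x i| ≤ |y i|) : nrm x ≤ nrm y :=
  Real.sqrt_le_sqrt (Finset.sum_le_sum fun i _ => sq_le_sq.mpr (h i))

lemma nrm_restr_sq {n : ℕ} (x : Fin n → ℝ) (B : Finset (Fin n)) :
    nrm (restr x B) ^ 2 = ∑ i ∈ B, x i ^ 2 := by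
  rw [nrm_sq]
  simp [restr, Finset.sum_ite_mem]

lemma sparse_of_supp {n s : ℕ} {x : Fin n → ℝ} (B : Finset (Fin n)) (hB : B.card ≤ s)
    (h : ∀ i ∉ B, x i = 0) : sparse s x := by
  refine (Finset.card_le_card fun i hi => ?_).trans hB
  by_contra hc
  exact (Finset.mem_filter.mp hi).2 (h i hc)

lemma sparse_restr {n s : ℕ} (x : Fin n → ℝ) (B : Finset (Fin n)) (hB : B.card ≤ s) :
    sparse s (restr x B) :=
  sparse_of_supp B hB fun i hi => by simp [restr, hi]

/-! ### Restricted isometry estimates -/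

lemma RIC.upper {m n s : ℕ} {A : Matrix (Fin m) (Fin n) ℝ} {δ : ℝ} (hA : RIC A s δ)
    {x : Fin n → ℝ} (hx : sparse s x) : nrm (A.mulVec x) ≤ Real.sqrt (1 + δ) * nrm x := by
  have h0 : (0 : ℝ) ≤ 1 + δ := by linarith [hA.1]
  refine le_of_sq_le_sq_of_nonneg ?_ (mul_nonneg (Real.sqrt_nonneg _) (nrm_nonneg _))
  rw [mul_pow, Real.sq_sqrt h0]
  exact (hA.2.2 x hx).2

lemma RIC.lower {m n s : ℕ} {A : Matrix (Fin m) (Fin n) ℝ} {δ : ℝ} (hA : RIC A s δ)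
    {x : Fin n → ℝ} (hx : sparse s x) : Real.sqrt (1 - δ) * nrm x ≤ nrm (A.mulVec x) := by
  have h0 : (0 : ℝ) ≤ 1 - δ := by linarith [hA.2.1]
  refine le_of_sq_le_sq_of_nonneg ?_ (nrm_nonneg _)
  rw [mul_pow, Real.sq_sqrt h0]
  exact (hA.2.2 x hx).1

/-- Polarized form of the restricted isometry property. -/
lemma RIC.dot_le {m n s : ℕ} {A : Matrix (Fin m) (Fin n) ℝ} {δ : ℝ} (hA : RIC A s δ)
    (v b : Fin n → ℝ) (S : Finset (Fin n)) (hS : S.card ≤ s)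
    (hv : ∀ i ∉ S, v i = 0) (hb : ∀ i ∉ S, b i = 0) :
    A.mulVec v ⬝ᵥ A.mulVec b - v ⬝ᵥ b ≤ δ * (nrm v * nrm b) := by
  -- The isometry bounds are applied to `v/‖v‖ ± b/‖b‖`, scaled by `‖v‖ ‖b‖`.
  have hP := (hA.2.2 (nrm b • v + nrm v • b)
    (sparse_of_supp S hS fun i hi => by simp [hv i hi, hb i hi])).2
  have hM := (hA.2.2 (nrm b • v - nrm v • b)
    (sparse_of_supp S hS fun i hi => by simp [hv i hi, hb i hi])).1
  simp only [nrm_sq_dot, mulVec_add, mulVec_sub, mulVec_smul, dotProduct_add, add_dotProduct,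
    dotProduct_sub, sub_dotProduct, dotProduct_smul, smul_dotProduct, smul_eq_mul] at hP hM
  rw [dotProduct_comm b v, dotProduct_comm (A.mulVec b) (A.mulVec v)] at hP hM
  rw [← nrm_sq_dot v, ← nrm_sq_dot b] at hP hM
  rcases (mul_nonneg (nrm_nonneg v) (nrm_nonneg b)).eq_or_lt with h0 | h0
  · have hz : v = 0 ∨ b = 0 := by
      rcases mul_eq_zero.mp h0.symm with h | h
      · left
        rw [nrm_eq_norm, norm_eq_zero] at h
        simpa using congrArg WithLp.ofLp h
      · right
        rw [nrm_eq_norm, norm_eq_zero] at h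
        simpa using congrArg WithLp.ofLp h
    rw [← h0]
    rcases hz with rfl | rfl <;> simp
  · refine le_of_mul_le_mul_left ?_ h0
    nlinarith

/-- The gradient step `AᵀA v + Aᵀ η` reproduces the sparse vector `v` up to a small error on every
`k`-subset of the coordinates. -/
lemma nrm_grad_le {m n k : ℕ} {A : Matrix (Fin m) (Fin n) ℝ} {δ₁ δ₃ : ℝ}
    (h1 : RIC A k δ₁) (h3 : RIC A (3 * k) δ₃) (v : Fin n → ℝ) (D : Finset (Fin n))
    (hD : D.card ≤ 2 * k) (hv : ∀ i ∉ D, v i = 0) (η : Fin m → ℝ)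
    (B : Finset (Fin n)) (hB : B.card ≤ k) :
    nrm (restr (Aᵀ.mulVec (A.mulVec v + η) - v) B)
      ≤ δ₃ * nrm v + Real.sqrt (1 + δ₁) * nrm η := by
  set g := Aᵀ.mulVec (A.mulVec v + η) - v with hg
  set b := restr g B with hbd
  have hsq : nrm b ^ 2 = (A.mulVec v ⬝ᵥ A.mulVec b - v ⬝ᵥ b) + η ⬝ᵥ A.mulVec b := by
    have e1 : nrm b ^ 2 = g ⬝ᵥ b := by
      rw [nrm_sq_dot]
      refine Finset.sum_congr rfl fun i _ => ?_
      by_cases hi : i ∈ B <;> simp [hbd, restr, hi]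
    rw [e1, hg, sub_dotProduct, mulVec_transpose, ← dotProduct_mulVec, add_dotProduct]
    ring
  have hd := h3.dot_le v b (D ∪ B) ((Finset.card_union_le _ _).trans (by omega))
    (fun i hi => hv i (by simp at hi; tauto))
    (fun i hi => by have : i ∉ B := by simp at hi; tauto
                    simp [hbd, restr, this])
  have he : η ⬝ᵥ A.mulVec b ≤ nrm η * (Real.sqrt (1 + δ₁) * nrm b) :=
    (dot_le_nrm _ _).trans
      (mul_le_mul_of_nonneg_left (h1.upper (sparse_restr g B hB)) (nrm_nonneg _))
  rcases (nrm_nonneg b).eq_or_lt with h0 | h0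
  · rw [← h0]
    have := h3.1
    have := nrm_nonneg v
    have := nrm_nonneg η
    positivity
  · refine le_of_mul_le_mul_right ?_ h0
    nlinarith

/-! ### Hard thresholding -/

lemma sum_sq_le_of_dominated {n : ℕ} (z : Fin n → ℝ) (B C : Finset (Fin n))
    (hc : B.card ≤ C.card) (h : ∀ i ∈ C, ∀ j ∈ B, |z j| ≤ |z i|) :
    ∑ i ∈ B, z i ^ 2 ≤ ∑ i ∈ C, z i ^ 2 := by
  rcases B.eq_empty_or_nonempty with rfl | hne
  · simpa using Finset.sum_nonneg fun i (_ : i ∈ C) => sq_nonneg (z i)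
  obtain ⟨j, hj, hmax⟩ := B.exists_max_image (fun i => z i ^ 2) hne
  calc ∑ i ∈ B, z i ^ 2 ≤ B.card • z j ^ 2 := Finset.sum_le_card_nsmul _ _ _ hmax
    _ ≤ C.card • z j ^ 2 := by gcongr
    _ ≤ ∑ i ∈ C, z i ^ 2 :=
      Finset.card_nsmul_le_sum _ _ _ fun i hi => sq_le_sq.mpr (h i hi j hj)

lemma card_sdiff_le_of_card_le {α : Type*} [DecidableEq α] {D Ω : Finset α}
    (h : D.card ≤ Ω.card) : (D \ Ω).card ≤ (Ω \ D).card := by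
  have e1 := Finset.card_sdiff_add_card_inter D Ω
  have e2 := Finset.card_sdiff_add_card_inter Ω D
  rw [Finset.inter_comm] at e2
  omega

/-- The error of the gradient step `x + H_q(r)` on a `k`-set `P` is controlled by the values of
`r - (x* - x)` on `k`-sets. -/
lemma nrm_restr_step_le {n k q : ℕ} (x xs r h : Fin n → ℝ) (Ω D : Finset (Fin n)) (ε : ℝ)
    (hD : D.card ≤ q) (hxD : ∀ i ∉ D, x i = 0) (hsD : ∀ i ∉ D, xs i = 0)
    (hh : IsHT q r h Ω)
    (hg : ∀ B : Finset (Fin n), B.card ≤ k → nrm (restr (r - (xs - x)) B) ≤ ε)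
    (P : Finset (Fin n)) (hP : P.card ≤ k) :
    nrm (restr (x + h - xs) P) ≤ 2 * ε := by
  obtain ⟨hcard, hin, hout, hdom⟩ := hh
  have heq : restr (x + h - xs) P
      = restr (r - (xs - x)) (P ∩ (Ω ∪ D)) - restr r ((P ∩ D) \ Ω) := by
    funext i
    by_cases hi : i ∈ P <;> by_cases hiΩ : i ∈ Ω <;> by_cases hiD : i ∈ D <;>
      simp [restr, hi, hiΩ, hiD, hin, hout, hxD, hsD]
    ring
  have hB : ((P ∩ D) \ Ω).card ≤ (Ω \ D).card :=
    (Finset.card_le_card (Finset.sdiff_subset_sdiff Finset.inter_subset_right le_rfl)).trans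
      (card_sdiff_le_of_card_le (hD.trans hcard.ge))
  obtain ⟨Q, hQ, hQc⟩ := Finset.exists_subset_card_eq hB
  have hswap : nrm (restr r ((P ∩ D) \ Ω)) ≤ nrm (restr r Q) := by
    refine le_of_sq_le_sq_of_nonneg ?_ (nrm_nonneg _)
    rw [nrm_restr_sq, nrm_restr_sq]
    refine sum_sq_le_of_dominated _ _ _ hQc.ge fun i hi j hj => ?_
    exact hdom i (Finset.mem_sdiff.mp (hQ hi)).1 j (Finset.mem_sdiff.mp hj).2
  have hrQ : restr r Q = restr (r - (xs - x)) Q := by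
    funext i
    by_cases hi : i ∈ Q
    · have hiD := (Finset.mem_sdiff.mp (hQ hi)).2
      simp [restr, hi, hxD i hiD, hsD i hiD]
    · simp [restr, hi]
  have hQk : Q.card ≤ k := by
    rw [hQc]
    exact (Finset.card_le_card (Finset.sdiff_subset.trans Finset.inter_subset_left)).trans hP
  have b1 := hg (P ∩ (Ω ∪ D)) ((Finset.card_le_card Finset.inter_subset_left).trans hP)
  have b2 := hg Q hQk
  rw [← hrQ] at b2
  rw [heq]
  linarith [nrm_sub_le (restr (r - (xs - x)) (P ∩ (Ω ∪ D))) (restr r ((P ∩ D) \ Ω))]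

/-! ### Block decomposition -/

/-- A vector supported on `N * k` coordinates is a sum of `N` vectors supported on `k` coordinates,
so its image is controlled by the restricted isometry constant of order `k`. -/
lemma nrm_mulVec_blocks {m n k : ℕ} {A : Matrix (Fin m) (Fin n) ℝ} {δ : ℝ} (hA : RIC A k δ)
    (z : Fin n → ℝ) (E : ℝ)
    (hE : ∀ P : Finset (Fin n), P.card ≤ k → nrm (restr z P) ≤ E) (N : ℕ) :
    ∀ D : Finset (Fin n), D.card ≤ N * k →
      nrm (A.mulVec (restr z D)) ≤ N * (Real.sqrt (1 + δ) * E) := by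
  induction N with
  | zero =>
    intro D hD
    have : D = ∅ := by simpa using hD
    subst this
    have : restr z ∅ = 0 := by funext i; simp [restr]
    simp [this, nrm]
  | succ N ih =>
    intro D hD
    obtain ⟨P, hPD, hPc⟩ := Finset.exists_subset_card_eq (min_le_right k D.card)
    have hs : restr z D = restr z (D \ P) + restr z P := by
      funext i
      by_cases hi : i ∈ P
      · simp [restr, hi, hPD hi]
      · simp [restr, hi]
    have hPk : P.card ≤ k := by omega
    have hc : (D \ P).card ≤ N * k := by
      rw [Finset.card_sdiff_of_subset hPD, hPc]
      rw [add_mul] at hD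
      omega
    rw [hs, mulVec_add]
    have b1 := ih _ hc
    have b2 := (hA.upper (sparse_restr z P hPk)).trans
      (mul_le_mul_of_nonneg_left (hE P hPk) (Real.sqrt_nonneg _))
    push_cast
    linarith [nrm_add_le (A.mulVec (restr z (D \ P))) (A.mulVec (restr z P))]

/-! ### Quasi-optimality with the golden ratio -/

/-- Hard thresholding is quasi-optimal: passing from `z` to `H_k(z)` costs at most the golden ratio
in the distance to a `k`-sparse vector, measured on the union of the two supports. -/
lemma hard_threshold_le {n k : ℕ} (z x xs : Fin n → ℝ) (Ω S : Finset (Fin n))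
    (hS : S.card ≤ k) (hxs : ∀ i ∉ S, xs i = 0) (hx : IsHT k z x Ω) :
    nrm (x - xs) ≤ (Real.sqrt 5 + 1) / 2 * nrm (restr (z - xs) (Ω ∪ S)) := by
  obtain ⟨hcard, hin, hout, hdom⟩ := hx
  set a := nrm (restr (z - xs) (S \ Ω)) with ha
  set b := nrm (restr (z - xs) Ω) with hb
  have hT : nrm (restr (z - xs) (Ω ∪ S)) ^ 2 = b ^ 2 + a ^ 2 := by
    rw [ha, hb, nrm_restr_sq, nrm_restr_sq, nrm_restr_sq, ← Finset.union_sdiff_self_eq_union,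
      Finset.sum_union Finset.disjoint_sdiff]
  have hc : nrm (restr xs (S \ Ω)) ≤ a + b := by
    have e : restr xs (S \ Ω) = restr z (S \ Ω) - restr (z - xs) (S \ Ω) := by
      funext i
      by_cases hi : i ∈ S \ Ω <;> simp only [restr, hi, Pi.sub_apply, if_true, if_false] <;> ring
    have hz : nrm (restr z (S \ Ω)) ≤ b := by
      refine le_of_sq_le_sq_of_nonneg ?_ (nrm_nonneg _)
      rw [hb, nrm_restr_sq, nrm_restr_sq]
      calc ∑ i ∈ S \ Ω, z i ^ 2 ≤ ∑ i ∈ Ω \ S, z i ^ 2 :=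
            sum_sq_le_of_dominated _ _ _ (card_sdiff_le_of_card_le (hS.trans hcard.ge))
              fun i hi j hj => hdom i (Finset.mem_sdiff.mp hi).1 j (Finset.mem_sdiff.mp hj).2
        _ = ∑ i ∈ Ω \ S, (z - xs) i ^ 2 :=
            Finset.sum_congr rfl fun i hi => by simp [hxs i (Finset.mem_sdiff.mp hi).2]
        _ ≤ ∑ i ∈ Ω, (z - xs) i ^ 2 :=
            Finset.sum_le_sum_of_subset_of_nonneg Finset.sdiff_subset fun _ _ _ => sq_nonneg _
    rw [e]
    linarith [nrm_sub_le (restr z (S \ Ω)) (restr (z - xs) (S \ Ω))]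
  have hx2 : nrm (x - xs) ^ 2 = b ^ 2 + nrm (restr xs (S \ Ω)) ^ 2 := by
    have e : nrm (x - xs) = nrm (restr (x - xs) (Ω ∪ S)) := by
      congr 1
      funext i
      by_cases hi : i ∈ Ω ∪ S
      · simp only [restr, hi, if_true]
      · have h2 : i ∉ Ω ∧ i ∉ S := by simpa using hi
        simp [restr, h2.1, h2.2, hout, hxs]
    rw [e, nrm_restr_sq, ← Finset.union_sdiff_self_eq_union,
      Finset.sum_union Finset.disjoint_sdiff, hb, nrm_restr_sq, nrm_restr_sq]
    congr 1
    · exact Finset.sum_congr rfl fun i hi => by simp [hin i hi]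
    · exact Finset.sum_congr rfl fun i hi => by simp [hout i (Finset.mem_sdiff.mp hi).2]
  have h5 : Real.sqrt 5 ^ 2 = 5 := Real.sq_sqrt (by norm_num)
  have h5' := Real.sqrt_nonneg 5
  have ha0 : 0 ≤ a := nrm_nonneg _
  have hb0 : 0 ≤ b := nrm_nonneg _
  have hc2 : nrm (restr xs (S \ Ω)) ^ 2 ≤ (a + b) ^ 2 :=
    pow_le_pow_left₀ (nrm_nonneg _) hc 2
  refine le_of_sq_le_sq_of_nonneg ?_ (mul_nonneg (by positivity) (nrm_nonneg _))
  rw [mul_pow, hT, hx2]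
  set f := (Real.sqrt 5 + 1) / 2 with hf
  have hf2 : f ^ 2 = f + 1 := by rw [hf]; nlinarith
  have hf1 : 1 ≤ f := by rw [hf]; nlinarith
  -- `φ²(a² + b²) - b² - (a + b)² = φ⁻¹ (φ a - b)²`, here multiplied through by `φ`.
  have key : 0 ≤ f * (f ^ 2 * (b ^ 2 + a ^ 2) - b ^ 2 - (a + b) ^ 2) := by
    have : f * (f ^ 2 * (b ^ 2 + a ^ 2) - b ^ 2 - (a + b) ^ 2) = (f * a - b) ^ 2 := by
      linear_combination ((b ^ 2 + a ^ 2) * f + b ^ 2) * hf2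
    rw [this]
    positivity
  nlinarith [nonneg_of_mul_nonneg_right key (by linarith)]

/-! ### Contraction and convergence -/

/-- The contraction estimate for one PGROT step from a `k`-sparse iterate `x` to `x'`. -/
lemma one_step {m n k q t : ℕ} (hq : 2 * k ≤ q) (ht : q ≤ t * k) (ht2 : 2 ≤ t)
    {A : Matrix (Fin m) (Fin n) ℝ} {y : Fin m → ℝ} {xs : Fin n → ℝ} (hxs : sparse k xs)
    {δ₁ δ₂ δ₃ : ℝ} (h1 : RIC A k δ₁) (h2 : RIC A (2 * k) δ₂) (h3 : RIC A (3 * k) δ₃)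
    {x x' h w : Fin n → ℝ} {Ω Ω' : Finset (Fin n)} (hx : sparse k x)
    (hh : IsHT q (Aᵀ.mulVec (y - A.mulVec x)) h Ω)
    (hw : ∀ i, 0 ≤ w i ∧ w i ≤ 1)
    (hopt : ∀ w' : Fin n → ℝ, (∑ i, w' i) = (k : ℝ) → (∀ i, 0 ≤ w' i ∧ w' i ≤ 1) →
      nrm (y - A.mulVec (fun i => w i * (x i + h i))) ^ 2 ≤
        nrm (y - A.mulVec (fun i => w' i * (x i + h i))) ^ 2)
    (hx' : IsHT k (fun i => w i * (x i + h i)) x' Ω') :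
    nrm (x' - xs) ≤
      3 * ((Real.sqrt 5 + 1) / 2) ^ 2 * ((t : ℝ) + 1) * δ₃ * Real.sqrt ((1 + δ₁) / (1 - δ₂))
        * nrm (x - xs) +
      (((Real.sqrt 5 + 1) / 2) ^ 2 * (3 * ((t : ℝ) + 1) * (1 + δ₁)) / Real.sqrt (1 - δ₂)
        + (Real.sqrt 5 + 1) / Real.sqrt (1 - δ₂)) * nrm (y - A.mulVec xs) := by
  set η := y - A.mulVec xs with hη
  set z : Fin n → ℝ := fun i => w i * (x i + h i) with hz
  set r := Aᵀ.mulVec (y - A.mulVec x) with hr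
  set S := suppF xs with hS
  set D := suppF x ∪ S with hD
  set ε := δ₃ * nrm (x - xs) + Real.sqrt (1 + δ₁) * nrm η with hε
  have hSc : S.card ≤ k := hxs
  have hXc : (suppF x).card ≤ k := hx
  have hS0 : ∀ i ∉ S, xs i = 0 := fun i hi => by simpa [hS, suppF] using hi
  have hX0 : ∀ i ∉ suppF x, x i = 0 := fun i hi => by simpa [suppF] using hi
  have hDc : D.card ≤ 2 * k := (Finset.card_union_le _ _).trans (by omega)
  have hDS : ∀ i ∉ D, xs i = 0 := fun i hi => hS0 i (by simp [hD] at hi; tauto)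
  have hDX : ∀ i ∉ D, x i = 0 := fun i hi => hX0 i (by simp [hD] at hi; tauto)
  have hg : ∀ B : Finset (Fin n), B.card ≤ k → nrm (restr (r - (xs - x)) B) ≤ ε := by
    intro B hB
    have hb := nrm_grad_le h1 h3 (xs - x) D hDc
      (fun i hi => by simp [hDS i hi, hDX i hi]) η B hB
    have e : A.mulVec (xs - x) + η = y - A.mulVec x := by
      rw [mulVec_sub, hη]; abel
    rw [e, ← nrm_neg (xs - x), neg_sub] at hb
    exact hb
  have hstep : ∀ P : Finset (Fin n), P.card ≤ k → nrm (restr (x + h - xs) P) ≤ 2 * ε :=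
    nrm_restr_step_le x xs r h Ω D ε (hDc.trans hq) hDX hDS hh hg
  have hε0 : 0 ≤ ε := (nrm_nonneg _).trans (hg ∅ (by simp))
  -- Comparison of `w` with the indicator of a `k`-set `K` containing the support of `xs`.
  have hfirst : nrm (y - A.mulVec z) ≤ Real.sqrt (1 + δ₁) * (2 * ε) + nrm η := by
    obtain ⟨K, hSK, -, hKc⟩ := Finset.exists_subsuperset_card_eq (Finset.subset_univ S) hSc
      (by rw [← hx'.1]; exact Finset.card_le_card (Finset.subset_univ _))
    have ho := hopt (fun i => if i ∈ K then 1 else 0) (by simp [hKc])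
      (fun i => by by_cases hi : i ∈ K <;> simp [hi])
    have ho' := le_of_sq_le_sq_of_nonneg ho (nrm_nonneg _)
    have e : y - A.mulVec (fun i => (if i ∈ K then (1 : ℝ) else 0) * (x i + h i))
        = η - A.mulVec (restr (x + h - xs) K) := by
      have e2 : (fun i => (if i ∈ K then (1 : ℝ) else 0) * (x i + h i))
          = restr (x + h - xs) K + xs := by
        funext i
        by_cases hi : i ∈ K
        · simp [restr, hi]
        · simp [restr, hi, hS0 i (fun hc => hi (hSK hc))]
      rw [e2, mulVec_add, hη]; abel
    rw [e] at ho'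
    have b2 := (h1.upper (sparse_restr (x + h - xs) K hKc.le)).trans
      (mul_le_mul_of_nonneg_left (hstep K hKc.le) (Real.sqrt_nonneg _))
    linarith [nrm_sub_le η (A.mulVec (restr (x + h - xs) K))]
  set T := Ω' ∪ S with hT
  have htail : nrm (A.mulVec (restr z Tᶜ)) ≤
      ((t + 1 : ℕ) : ℝ) * (Real.sqrt (1 + δ₁) * (2 * ε)) := by
    have e : restr z Tᶜ = restr (restr z Tᶜ) (suppF x ∪ Ω) := by
      funext i
      by_cases hi : i ∈ suppF x ∪ Ω
      · simp only [restr, hi, if_true]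
      · have hh2 : i ∉ suppF x ∧ i ∉ Ω := by simpa using hi
        simp [restr, hh2.1, hh2.2, hz, hX0, hh.2.2.1]
    rw [e]
    refine nrm_mulVec_blocks h1 (restr z Tᶜ) (2 * ε) (fun P hP => ?_) (t + 1) _ ?_
    · refine (nrm_mono fun i => ?_).trans (hstep P hP)
      by_cases hi : i ∈ P
      · by_cases hiT : i ∈ T
        · simp [restr, hi, hiT]
        · have hiS : i ∉ S := fun hc => hiT (Finset.mem_union_right _ hc)
          simp only [restr, hi, hiT, hz, hS0 i hiS, Finset.mem_compl, not_false_eq_true, if_true,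
            Pi.add_apply, Pi.sub_apply, sub_zero, abs_mul, abs_of_nonneg (hw i).1]
          exact mul_le_of_le_one_left (abs_nonneg _) (hw i).2
      · simp [restr, hi]
    · have := Finset.card_union_le (suppF x) Ω
      have := hh.1
      rw [add_mul]
      omega
  have hmain : Real.sqrt (1 - δ₂) * nrm (restr (z - xs) T) ≤
      ((t : ℝ) + 2) * (Real.sqrt (1 + δ₁) * (2 * ε)) + 2 * nrm η := by
    have hTc : T.card ≤ 2 * k := (Finset.card_union_le _ _).trans (by have := hx'.1; omega)
    have b1 := h2.lower (sparse_restr (z - xs) T hTc)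
    have e : restr (z - xs) T = z - xs - restr z Tᶜ := by
      funext i
      by_cases hi : i ∈ T
      · simp [restr, hi]
      · have hiS : i ∉ S := fun hc => hi (Finset.mem_union_right _ hc)
        simp [restr, hi, hS0 i hiS]
    have e2 : A.mulVec (restr (z - xs) T)
        = (η - (y - A.mulVec z)) - A.mulVec (restr z Tᶜ) := by
      rw [e, mulVec_sub, mulVec_sub, hη]; abel
    rw [e2] at b1
    have b2 := nrm_sub_le (η - (y - A.mulVec z)) (A.mulVec (restr z Tᶜ))
    have b3 := nrm_sub_le η (y - A.mulVec z)
    push_cast at htail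
    linarith
  have hht := hard_threshold_le z x' xs Ω' S hSc hS0 hx'
  have hc0 : 0 < Real.sqrt (1 - δ₂) := Real.sqrt_pos.mpr (by linarith [h2.2.1])
  have hs0 : 0 ≤ Real.sqrt (1 + δ₁) := Real.sqrt_nonneg _
  have hs2 : Real.sqrt (1 + δ₁) ^ 2 = 1 + δ₁ := Real.sq_sqrt (by linarith [h1.1])
  rw [Real.sqrt_div (by linarith [h1.1])]
  set s := Real.sqrt (1 + δ₁)
  rw [← hs2]
  set c := Real.sqrt (1 - δ₂)
  have hf : (3 : ℝ) / 2 ≤ (Real.sqrt 5 + 1) / 2 := by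
    have : (2 : ℝ) ≤ Real.sqrt 5 := Real.le_sqrt_of_sq_le (by norm_num)
    linarith
  have hfe : Real.sqrt 5 + 1 = 2 * ((Real.sqrt 5 + 1) / 2) := by ring
  set f := (Real.sqrt 5 + 1) / 2
  rw [hfe]
  have ht' : (2 : ℝ) ≤ t := by exact_mod_cast ht2
  have hcoef : 2 * ((t : ℝ) + 2) ≤ 3 * f * (t + 1) := by nlinarith
  have hN : nrm (restr (z - xs) T) ≤ (3 * f * ((t : ℝ) + 1) * (s * ε) + 2 * nrm η) / c := by
    rw [le_div_iff₀ hc0]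
    have := mul_le_mul_of_nonneg_right hcoef (mul_nonneg hs0 hε0)
    linarith
  calc nrm (x' - xs) ≤ f * ((3 * f * ((t : ℝ) + 1) * (s * ε) + 2 * nrm η) / c) :=
        hht.trans (mul_le_mul_of_nonneg_left hN (by linarith))
    _ = _ := by rw [hε]; field_simp; ring

lemma rate_lt_one {ψ δ₁ δ₂ δ₃ : ℝ} (hψ : 0 ≤ ψ) (h0 : 0 ≤ δ₁) (h12 : δ₁ ≤ δ₂) (h23 : δ₂ ≤ δ₃)
    (h3 : δ₃ < 1) (hδ : δ₃ < 2 / (Real.sqrt (ψ ^ 2 + 6 * ψ + 1) + ψ + 1)) :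
    ψ * δ₃ * Real.sqrt ((1 + δ₁) / (1 - δ₂)) < 1 := by
  have hR2 : Real.sqrt (ψ ^ 2 + 6 * ψ + 1) ^ 2 = ψ ^ 2 + 6 * ψ + 1 :=
    Real.sq_sqrt (by positivity)
  have hR0 := Real.sqrt_nonneg (ψ ^ 2 + 6 * ψ + 1)
  set R := Real.sqrt (ψ ^ 2 + 6 * ψ + 1)
  have hd0 : 0 ≤ δ₃ := by linarith
  rw [lt_div_iff₀ (by linarith)] at hδ
  have hquad : ψ * δ₃ * (1 + δ₃) < 1 - δ₃ := by
    -- With `G = (R + ψ + 1) / 2` one has `G² = (ψ + 1) G + ψ`, and `δ₃ G < 1`.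
    set G := (R + ψ + 1) / 2 with hG
    have hG2 : G ^ 2 = (ψ + 1) * G + ψ := by rw [hG]; nlinarith
    have hG0 : 0 < G := by rw [hG]; linarith
    have hdG : δ₃ * G < 1 := by rw [hG]; linarith
    have hlt : ψ * (δ₃ * G) ^ 2 + (ψ + 1) * G * (δ₃ * G) < G ^ 2 := by
      have h01 : 0 ≤ δ₃ * G := by positivity
      have : (ψ + 1) * G * (δ₃ * G) < (ψ + 1) * G * 1 :=
        mul_lt_mul_of_pos_left hdG (by positivity)
      have : ψ * (δ₃ * G) ^ 2 ≤ ψ * 1 :=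
        mul_le_mul_of_nonneg_left (pow_le_one₀ h01 hdG.le) hψ
      linarith
    have hG3 : 0 < G ^ 2 := by positivity
    refine lt_of_mul_lt_mul_right ?_ hG3.le
    nlinarith
  have hle : Real.sqrt ((1 + δ₁) / (1 - δ₂)) ≤ (1 + δ₃) / (1 - δ₃) := by
    have ha : (1 + δ₁) / (1 - δ₂) ≤ (1 + δ₃) / (1 - δ₃) := by
      apply div_le_div₀ <;> linarith
    have hb : 1 ≤ (1 + δ₃) / (1 - δ₃) := by rw [le_div_iff₀ (by linarith)]; linarith
    refine Real.sqrt_le_iff.mpr ⟨by linarith, ha.trans ?_⟩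
    nlinarith
  calc ψ * δ₃ * Real.sqrt ((1 + δ₁) / (1 - δ₂)) ≤ ψ * δ₃ * ((1 + δ₃) / (1 - δ₃)) := by gcongr
    _ < 1 := by
      rw [← mul_div_assoc, div_lt_one (by linarith)]
      exact hquad

theorem stmt8 {m n : ℕ} (k q : ℕ) (hk : 0 < k) (hq : 2 * k ≤ q)
    (A : Matrix (Fin m) (Fin n) ℝ) (y : Fin m → ℝ)
    (xs : Fin n → ℝ) (hxs : sparse k xs) (η : Fin m → ℝ) (hη : η = y - A.mulVec xs)
    (t : ℕ) (ht : t = ⌈(q : ℝ) / (k : ℝ)⌉₊)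
    (ψ : ℝ) (hψ : ψ = 3 * ((Real.sqrt 5 + 1) / 2) ^ 2 * ((t : ℝ) + 1))
    (δ₁ δ₂ δ₃ : ℝ) (h1 : RIC A k δ₁) (h2 : RIC A (2 * k) δ₂) (h3 : RIC A (3 * k) δ₃)
    (h12 : δ₁ ≤ δ₂) (h23 : δ₂ ≤ δ₃)
    (hδ : δ₃ < 2 / (Real.sqrt (ψ ^ 2 + 6 * ψ + 1) + ψ + 1))
    (x : ℕ → Fin n → ℝ) (hx : IsPGROTSeq A y k q x)
    (ρ τ : ℝ)
    (hρ : ρ = 3 * ((Real.sqrt 5 + 1) / 2) ^ 2 * ((t : ℝ) + 1) * δ₃ *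
      Real.sqrt ((1 + δ₁) / (1 - δ₂)))
    (hτ : τ = ((Real.sqrt 5 + 1) / 2) ^ 2 * (3 * ((t : ℝ) + 1) * (1 + δ₁)) /
      Real.sqrt (1 - δ₂) + (Real.sqrt 5 + 1) / Real.sqrt (1 - δ₂)) :
    ρ < 1 ∧ ∀ p : ℕ,
      nrm (x (p + 1) - xs) ≤ ρ ^ p * nrm (x 0 - xs) + τ / (1 - ρ) * nrm η := by
  have hk' : (0 : ℝ) < k := by exact_mod_cast hk
  have hqt : q ≤ t * k := by
    have := Nat.le_ceil ((q : ℝ) / (k : ℝ))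
    rw [← ht, div_le_iff₀ hk'] at this
    exact_mod_cast this
  have ht2 : 2 ≤ t := Nat.le_of_mul_le_mul_right (hq.trans hqt) hk
  have hψ0 : 0 ≤ ψ := by rw [hψ]; positivity
  have hρ1 : ρ < 1 := by
    rw [hρ, ← hψ]
    exact rate_lt_one hψ0 h1.1 h12 h23 h3.2.1 hδ
  have hρ0 : 0 ≤ ρ := by
    have := h3.1
    rw [hρ]
    positivity
  have hτ0 : 0 ≤ τ := by
    have := h1.1
    rw [hτ]
    positivity
  refine ⟨hρ1, ?_⟩
  have hsp : ∀ p, sparse k (x p) := by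
    intro p
    cases p with
    | zero => exact sparse_of_supp ∅ (by simp) fun i _ => by simp [hx.1]
    | succ p =>
      obtain ⟨h, Ω, w, Ω', -, -, -, -, hT⟩ := hx.2 p
      exact sparse_of_supp Ω' hT.1.le hT.2.2.1
  have hrec : ∀ p, nrm (x (p + 1) - xs) ≤ ρ * nrm (x p - xs) + τ * nrm η := by
    intro p
    obtain ⟨h, Ω, w, Ω', hh, -, hw, hopt, hT⟩ := hx.2 p
    rw [hρ, hτ, hη]
    exact one_step hq hqt ht2 hxs h1 h2 h3 (hsp p) hh hw hopt hT
  have hfix : ρ * (τ / (1 - ρ) * nrm η) + τ * nrm η = τ / (1 - ρ) * nrm η := by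
    have : 1 - ρ ≠ 0 := by linarith
    field_simp
    ring
  have hpow : ∀ p, nrm (x p - xs) ≤ ρ ^ p * nrm (x 0 - xs) + τ / (1 - ρ) * nrm η := by
    intro p
    induction p with
    | zero =>
      have : 0 ≤ τ / (1 - ρ) * nrm η :=
        mul_nonneg (div_nonneg hτ0 (by linarith)) (nrm_nonneg _)
      simpa using this
    | succ p ih =>
      have := mul_le_mul_of_nonneg_left ih hρ0
      rw [pow_succ]
      linarith [hrec p]
  intro p
  have hle : ρ ^ (p + 1) ≤ ρ ^ p := pow_le_pow_of_le_one hρ0 hρ1.le (Nat.le_succ p)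
  linarith [hpow (p + 1), mul_le_mul_of_nonneg_right hle (nrm_nonneg (x 0 - xs))]
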